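/- Let q₀ be a positive real number and μ ∈ ℂ with Re μ > 0, and assume θ₂(iν) ≠ 0, θ₃(iν) ≠ 0 and θ₄(iν) ≠ 0 for every ν with Re ν > 0. Then: w₃[q₀](i/μ) = −μ² w₁[1/q₀](iμ); w₃'[q₀](i/μ) = μ⁴ w₁'[1/q₀](iμ) + 2μ³ w₁[1/q₀](iμ); w₃''[q₀](i/μ) = −μ⁶ w₁''[1/q₀](iμ) − 6μ⁵ w₁'[1/q₀](iμ) − 6μ⁴ w₁[1/q₀](iμ); w₃⁽³⁾[q₀](i/μ) = μ⁸ w₁⁽³⁾[1/q₀](iμ) + 12μ⁷ w₁''[1/q₀](iμ) + 36μ⁶ w₁'[1/q₀](iμ) + 24μ⁵ w₁[1/q₀](iμ); w₃⁽⁴⁾[q₀](i/μ) = −μ¹⁰ w₁⁽⁴⁾[1/q₀](iμ) − 20μ⁹ w₁⁽³⁾[1/q₀](iμ) − 120μ⁸ w₁''[1/q₀](iμ) − 240μ⁷ w₁'[1/q₀](iμ) − 120μ⁶ w₁[1/q₀](iμ). -/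

import Mathlib

noncomputable section

/-- The theta function with characteristics `θ[p,q](iμ)`. -/
def theta (p q μ : ℂ) : ℂ :=
  ∑' m : ℤ, Complex.exp (-(Real.pi : ℂ) * ((m : ℂ) + p) ^ 2 * μ +
    2 * (Real.pi : ℂ) * Complex.I * ((m : ℂ) + p) * q)

/-- The characteristic derivative `∂qθ[p,q](iμ)`. -/
def thetaQ (p q μ : ℂ) : ℂ :=
  2 * (Real.pi : ℂ) * Complex.I *
    ∑' m : ℤ, ((m : ℂ) + p) * Complex.exp (-(Real.pi : ℂ) * ((m : ℂ) + p) ^ 2 * μ +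
      2 * (Real.pi : ℂ) * Complex.I * ((m : ℂ) + p) * q)

/-- The n-th μ-derivative `∂μⁿθ[p,q](iμ)`, given by its absolutely convergent series. -/
def thetaD (n : ℕ) (p q μ : ℂ) : ℂ :=
  (-(Real.pi : ℂ)) ^ n *
    ∑' m : ℤ, ((m : ℂ) + p) ^ (2 * n) *
      Complex.exp (-(Real.pi : ℂ) * ((m : ℂ) + p) ^ 2 * μ +
        2 * (Real.pi : ℂ) * Complex.I * ((m : ℂ) + p) * q)

/-- The n-th μ-derivative `∂μⁿ∂qθ[p,q](iμ)`, given by its absolutely convergent series. -/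
def thetaQD (n : ℕ) (p q μ : ℂ) : ℂ :=
  2 * Complex.I * (-1 : ℂ) ^ n * (Real.pi : ℂ) ^ (n + 1) *
    ∑' m : ℤ, ((m : ℂ) + p) ^ (2 * n + 1) *
      Complex.exp (-(Real.pi : ℂ) * ((m : ℂ) + p) ^ 2 * μ +
        2 * (Real.pi : ℂ) * Complex.I * ((m : ℂ) + p) * q)

/-- The constant `C(j|n) = (−i)ⁿ n! / (2ʲ (n−2j)! (2j)!!)` with `(2j)!! = 2ʲ j!`. -/
def Ccoef (j n : ℕ) : ℂ :=
  (-Complex.I) ^ n * (n.factorial : ℂ) /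
    ((2 : ℂ) ^ j * ((n - 2 * j).factorial : ℂ) * ((2 : ℂ) ^ j * (j.factorial : ℂ)))

/-- `w₁[p,q](iμ)` of the two-parametric family. -/
def w1 (p q μ : ℂ) : ℂ :=
  -(Complex.I / 2) * theta 0 0 μ * theta 0 (1 / 2) μ * thetaQ p (q + 1 / 2) μ /
    (Complex.exp ((Real.pi : ℂ) * Complex.I * p) * theta p q μ)

/-- `w₂[p,q](iμ)` of the two-parametric family. -/
def w2 (p q μ : ℂ) : ℂ :=
  (Complex.I / 2) * theta (1 / 2) 0 μ * theta 0 (1 / 2) μ *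
    thetaQ (p + 1 / 2) (q + 1 / 2) μ /
    (Complex.exp ((Real.pi : ℂ) * Complex.I * p) * theta p q μ)

/-- `w₃[p,q](iμ)` of the two-parametric family. -/
def w3 (p q μ : ℂ) : ℂ :=
  -(1 / 2 : ℂ) * theta (1 / 2) 0 μ * theta 0 0 μ * thetaQ (p + 1 / 2) q μ / theta p q μ

/-- The conformal factor `F[p,q](iμ)` of the two-parametric family. -/
def Ftwo (Λ p q μ : ℂ) : ℂ :=
  (2 / ((Real.pi : ℂ) * Λ)) * (theta p q μ / thetaQ p q μ) ^ 2

/-- `w₁[q₀](iμ)` of the one-parametric family. -/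
def v1 (q0 μ : ℂ) : ℂ := 1 / (μ + q0) + 2 * thetaD 1 (1 / 2) 0 μ / theta (1 / 2) 0 μ

/-- `w₂[q₀](iμ)` of the one-parametric family. -/
def v2 (q0 μ : ℂ) : ℂ := 1 / (μ + q0) + 2 * thetaD 1 0 0 μ / theta 0 0 μ

/-- `w₃[q₀](iμ)` of the one-parametric family. -/
def v3 (q0 μ : ℂ) : ℂ := 1 / (μ + q0) + 2 * thetaD 1 0 (1 / 2) μ / theta 0 (1 / 2) μ

/-- The conformal factor `F[q₀](iμ) = C(μ+q₀)²` of the one-parametric family. -/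
def Fone (C q0 μ : ℂ) : ℂ := C * (μ + q0) ^ 2

/-- The Seeley–de Witt coefficient `ã₀[p,q](iμ)` of the two-parametric family. -/
def a0two (Λ p q μ : ℂ) : ℂ :=
  4 * Ftwo Λ p q μ ^ 2 * w1 p q μ * w2 p q μ * w3 p q μ

/-- The Seeley–de Witt coefficient `ã₀[q₀](iμ)` of the one-parametric family. -/
def a0one (C q0 μ : ℂ) : ℂ :=
  4 * Fone C q0 μ ^ 2 * v1 q0 μ * v2 q0 μ * v3 q0 μ

/-- The Seeley–de Witt coefficient `ã₂[p,q](iμ)` of the two-parametric family. -/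
def a2two (Λ p q μ : ℂ) : ℂ :=
  -(Ftwo Λ p q μ / 3) * (w1 p q μ ^ 2 + w2 p q μ ^ 2 + w3 p q μ ^ 2) +
  (Ftwo Λ p q μ / 6) *
    ((w1 p q μ ^ 2 * w2 p q μ ^ 2 - deriv (w3 p q) μ ^ 2) / w3 p q μ ^ 2 +
     (w1 p q μ ^ 2 * w3 p q μ ^ 2 - deriv (w2 p q) μ ^ 2) / w2 p q μ ^ 2 +
     (w2 p q μ ^ 2 * w3 p q μ ^ 2 - deriv (w1 p q) μ ^ 2) / w1 p q μ ^ 2) -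
  (Ftwo Λ p q μ / 3) *
    (deriv (w1 p q) μ * deriv (w2 p q) μ / (w1 p q μ * w2 p q μ) +
     deriv (w1 p q) μ * deriv (w3 p q) μ / (w1 p q μ * w3 p q μ) +
     deriv (w2 p q) μ * deriv (w3 p q) μ / (w2 p q μ * w3 p q μ)) +
  (Ftwo Λ p q μ / 3) *
    (iteratedDeriv 2 (w1 p q) μ / w1 p q μ + iteratedDeriv 2 (w2 p q) μ / w2 p q μ +
     iteratedDeriv 2 (w3 p q) μ / w3 p q μ) -
  deriv (Ftwo Λ p q) μ ^ 2 / (2 * Ftwo Λ p q μ) + iteratedDeriv 2 (Ftwo Λ p q) μ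

/-!
The function `w[p,q;q₀] = 1/(μ+q₀) + 2 ∂μθ[p,q]/θ[p,q]` is the logarithmic derivative of
`Φ[p,q;q₀](μ) = (μ+q₀) θ[p,q](iμ)²`. In Jacobi's functional equation
`θ[p,q](i/μ) = μ^(1/2) exp(2πipq) θ[q,-p](iμ)` the factor `μ` from `θ²` cancels the one from
`1/μ + q₀ = q₀ (μ + 1/q₀)/μ`, so that `Φ[p,q;q₀](1/μ)` is a constant multiple of
`Φ[q,-p;1/q₀](μ)`. The chain rule then gives `w[p,q;q₀](1/μ) = -μ² w[q,-p;1/q₀](μ)`, and the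
derivatives of a function `x ↦ x⁻² g(1/x)` have closed-form coefficients at every order.
-/

section WeightedLah

open Finset

/-- The weight-`w` Lah number `(n choose k) (w+k)(w+k+1)⋯(w+n-1)`, the coefficient of `g⁽ᵏ⁾(1/x)`
in the `n`-th derivative of `x ↦ x⁻ʷ g(1/x)`. Weight `0` gives the unsigned Lah numbers. -/
def weightedLah (w n k : ℕ) : ℕ := n.choose k * (w + k).ascFactorial (n - k)

lemma weightedLah_eq_zero_of_lt (w : ℕ) {n k : ℕ} (h : n < k) : weightedLah w n k = 0 := by
  rw [weightedLah, Nat.choose_eq_zero_of_lt h, zero_mul]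

lemma weightedLah_self (w n : ℕ) : weightedLah w n n = 1 := by
  simp [weightedLah]

lemma weightedLah_succ_zero (w n : ℕ) :
    weightedLah w (n + 1) 0 = (w + n) * weightedLah w n 0 := by
  simp [weightedLah, Nat.ascFactorial_succ]

lemma weightedLah_succ_succ (w n k : ℕ) :
    weightedLah w (n + 1) (k + 1) =
      (w + n + (k + 1)) * weightedLah w n (k + 1) + weightedLah w n k := by
  rcases lt_trichotomy n k with h | rfl | h
  · rw [weightedLah_eq_zero_of_lt w h, weightedLah_eq_zero_of_lt w (by lia : n < k + 1),
      weightedLah_eq_zero_of_lt w (by lia : n + 1 < k + 1), mul_zero]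
  · rw [weightedLah_self, weightedLah_self, weightedLah_eq_zero_of_lt w n.lt_succ_self, mul_zero]
  · obtain ⟨j, rfl⟩ : ∃ j, n = k + 1 + j := Nat.exists_eq_add_of_le h
    have choose_rel : (k + 1 + j).choose (k + 1) * (k + 1) = (k + 1 + j).choose k * (j + 1) := by
      rw [Nat.choose_succ_right_eq]
      congr 1
      lia
    have shift_base : (w + k).ascFactorial (j + 1) = (w + k) * (w + (k + 1)).ascFactorial j := by
      rw [Nat.ascFactorial_succ, ← Nat.succ_ascFactorial, ← Nat.add_succ]
    rw [weightedLah, weightedLah, weightedLah, Nat.choose_succ_succ,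
      show k + 1 + j + 1 - (k + 1) = j + 1 by lia, show k + 1 + j - (k + 1) = j by lia,
      show k + 1 + j - k = j + 1 by lia, shift_base, Nat.ascFactorial_succ]
    linear_combination (w + (k + 1)).ascFactorial j * choose_rel.symm

lemma sum_weightedLah_succ_nsmul {M : Type*} [AddCommMonoid M] (w n : ℕ) (a : ℕ → M) :
    ∑ k ∈ range (n + 2), weightedLah w (n + 1) k • a k =
      ∑ k ∈ range (n + 1), weightedLah w n k • ((w + n + k) • a k + a (k + 1)) := by
  have extend : ∑ k ∈ range (n + 1), ((w + n + k) * weightedLah w n k) • a k =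
      ∑ k ∈ range (n + 2), ((w + n + k) * weightedLah w n k) • a k := by
    rw [sum_range_succ _ (n + 1), weightedLah_eq_zero_of_lt w n.lt_succ_self, mul_zero, zero_smul,
      add_zero]
  simp only [smul_add, smul_smul, sum_add_distrib, mul_comm (weightedLah w n _)]
  rw [extend, sum_range_succ', sum_range_succ' _ (n + 1), weightedLah_succ_zero, add_zero,
    add_right_comm, ← sum_add_distrib]
  simp only [weightedLah_succ_succ, add_smul]

end WeightedLah

section Inversion

variable {𝕜 E : Type*} [NontriviallyNormedField 𝕜] [NormedAddCommGroup E] [NormedSpace 𝕜 E]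

lemma hasDerivAt_iteratedDeriv {g : 𝕜 → E} {x : 𝕜} {n k : ℕ} (hg : ContDiffAt 𝕜 n g x)
    (hk : k < n) : HasDerivAt (iteratedDeriv k g) (iteratedDeriv (k + 1) g x) x := by
  rw [iteratedDeriv_succ, hasDerivAt_deriv_iff, iteratedDeriv_eq_equiv_comp,
    LinearIsometryEquiv.comp_differentiableAt_iff]
  exact hg.differentiableAt_iteratedFDeriv (by exact_mod_cast hk)

lemma hasDerivAt_inv_pow_smul_comp_inv {g : 𝕜 → E} {g' : E} {x : 𝕜} (m : ℕ) (hx : x ≠ 0)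
    (hg : HasDerivAt g g' x⁻¹) :
    HasDerivAt (fun s => s⁻¹ ^ m • g s⁻¹)
      (-(m • x⁻¹ ^ (m + 1) • g x⁻¹ + x⁻¹ ^ (m + 2) • g')) x := by
  have hpow : HasDerivAt (fun y => y ^ m • g y)
      (x⁻¹ ^ m • g' + (m * x⁻¹ ^ (m - 1)) • g x⁻¹) x⁻¹ := (hasDerivAt_pow m x⁻¹).smul hg
  have pow_pred : (m : 𝕜) * x⁻¹ ^ (m + 1) = m * x⁻¹ ^ (m - 1) * x⁻¹ ^ 2 := by
    cases m with
    | zero => simp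
    | succ m => rw [Nat.add_sub_cancel]; ring
  refine (hpow.scomp x (hasDerivAt_inv hx)).congr_deriv ?_
  rw [← Nat.cast_smul_eq_nsmul 𝕜, smul_smul, pow_pred, ← inv_pow]
  module

theorem iteratedDeriv_inv_pow_smul_comp_inv (w n : ℕ) {g : 𝕜 → E} {x : 𝕜} (hx : x ≠ 0)
    (hg : ContDiffAt 𝕜 n g x⁻¹) :
    iteratedDeriv n (fun s => s⁻¹ ^ w • g s⁻¹) x =
      (-1 : 𝕜) ^ n • ∑ k ∈ Finset.range (n + 1),
        weightedLah w n k • x⁻¹ ^ (w + n + k) • iteratedDeriv k g x⁻¹ := by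
  induction n generalizing x with
  | zero => simp [weightedLah]
  | succ n ih =>
    have hsmooth : ∀ᶠ s in nhds x, s ≠ 0 ∧ ContDiffAt 𝕜 n g s⁻¹ :=
      (eventually_ne_nhds hx).and <| (continuousAt_inv₀ hx).eventually <|
        (hg.of_le (by exact_mod_cast n.le_succ)).eventually (by simp)
    have heq : iteratedDeriv n (fun s => s⁻¹ ^ w • g s⁻¹) =ᶠ[nhds x] _ :=
      hsmooth.mono fun s hs => ih hs.1 hs.2
    have hderiv : HasDerivAt (fun s => (-1 : 𝕜) ^ n • ∑ k ∈ Finset.range (n + 1),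
        weightedLah w n k • s⁻¹ ^ (w + n + k) • iteratedDeriv k g s⁻¹) _ x :=
      (HasDerivAt.fun_sum fun k hk => (hasDerivAt_inv_pow_smul_comp_inv (w + n + k) hx
        (hasDerivAt_iteratedDeriv hg (Finset.mem_range.mp hk))).fun_const_smul _).fun_const_smul _
    rw [iteratedDeriv_succ, heq.deriv_eq, hderiv.deriv, sum_weightedLah_succ_nsmul]
    simp only [smul_neg, Finset.sum_neg_distrib, pow_succ, mul_neg_one, neg_smul]
    simp only [← pow_succ, add_assoc, add_comm, add_left_comm]

lemma logDeriv_comp_inv {G : 𝕜 → 𝕜} {x : 𝕜} (hx : x ≠ 0) (hG : DifferentiableAt 𝕜 G x⁻¹) :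
    logDeriv (fun s => G s⁻¹) x = -(x⁻¹ ^ 2 * logDeriv G x⁻¹) := by
  change logDeriv (G ∘ Inv.inv) x = _
  rw [logDeriv_comp hG (differentiableAt_inv hx), deriv_inv]
  ring

end Inversion

section Theta

open Complex

lemma inv_re_pos {μ : ℂ} (hμ : 0 < μ.re) : 0 < μ⁻¹.re := by
  rw [inv_re]
  exact div_pos hμ (normSq_pos.mpr (ne_zero_of_re_pos hμ))

lemma exp_eq_mul_jacobiTheta₂_term (p q μ : ℂ) (m : ℤ) :
    exp (-(Real.pi : ℂ) * ((m : ℂ) + p) ^ 2 * μ + 2 * (Real.pi : ℂ) * I * ((m : ℂ) + p) * q) =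
      exp (-Real.pi * p ^ 2 * μ + 2 * Real.pi * I * p * q) *
        jacobiTheta₂_term m (q + I * μ * p) (I * μ) := by
  rw [jacobiTheta₂_term, ← exp_add]
  congr 1
  linear_combination (-2 * (Real.pi : ℂ) * m * μ * p - Real.pi * m ^ 2 * μ) * I_sq

lemma theta_eq_mul_jacobiTheta₂ (p q μ : ℂ) :
    theta p q μ = exp (-Real.pi * p ^ 2 * μ + 2 * Real.pi * I * p * q) *
      jacobiTheta₂ (q + I * μ * p) (I * μ) := by
  rw [jacobiTheta₂, ← tsum_mul_left]
  exact tsum_congr (exp_eq_mul_jacobiTheta₂_term p q μ)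

lemma thetaD_one_eq_mul_jacobiTheta₂_fderiv (p q : ℂ) {μ : ℂ} (hμ : 0 < μ.re) :
    thetaD 1 p q μ = exp (-Real.pi * p ^ 2 * μ + 2 * Real.pi * I * p * q) *
      (-Real.pi * p ^ 2 * jacobiTheta₂ (q + I * μ * p) (I * μ) +
        jacobiTheta₂_fderiv (q + I * μ * p) (I * μ) (I * p, I)) := by
  have hτ : 0 < (I * μ).im := by simpa using hμ
  set z := q + I * μ * p
  set A := exp (-Real.pi * p ^ 2 * μ + 2 * Real.pi * I * p * q)
  have hterm (m : ℤ) : -Real.pi * (((m : ℂ) + p) ^ 2 * (A * jacobiTheta₂_term m z (I * μ))) =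
      A * (-Real.pi * p ^ 2 * jacobiTheta₂_term m z (I * μ) +
        jacobiTheta₂_term_fderiv m z (I * μ) (I * p, I)) := by
    simp only [jacobiTheta₂_term_fderiv, jacobiTheta₂_term, smul_apply, add_apply,
      ContinuousLinearMap.coe_fst', ContinuousLinearMap.coe_snd', smul_eq_mul]
    linear_combination -A * exp (2 * Real.pi * I * m * z + Real.pi * I * m ^ 2 * (I * μ)) *
      Real.pi * (2 * m * p + m ^ 2) * I_sq
  simp only [thetaD, pow_one, mul_one, exp_eq_mul_jacobiTheta₂_term]
  rw [← tsum_mul_left, tsum_congr hterm]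
  exact ((((hasSum_jacobiTheta₂_term z hτ).mul_left _).add
    ((hasSum_jacobiTheta₂_term_fderiv z hτ).mapL
      (ContinuousLinearMap.apply ℂ ℂ (I * p, I)))).mul_left A).tsum_eq

lemma hasDerivAt_theta (p q : ℂ) {μ : ℂ} (hμ : 0 < μ.re) :
    HasDerivAt (theta p q) (thetaD 1 p q μ) μ := by
  have hexp := (((hasDerivAt_id μ).const_mul (-Real.pi * p ^ 2 : ℂ)).add_const
    (2 * Real.pi * I * p * q)).cexp
  have hpath : HasDerivAt (fun ν => (q + I * ν * p, I * ν)) (I * p, I) μ := by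
    simpa using ((((hasDerivAt_id μ).const_mul I).mul_const p).const_add q).prodMk
      ((hasDerivAt_id μ).const_mul I)
  have hjac : HasDerivAt (fun ν => jacobiTheta₂ (q + I * ν * p) (I * ν))
      (jacobiTheta₂_fderiv (q + I * μ * p) (I * μ) (I * p, I)) μ :=
    HasFDerivAt.comp_hasDerivAt (l := fun w : ℂ × ℂ => jacobiTheta₂ w.1 w.2)
      (f := fun ν => (q + I * ν * p, I * ν)) μ
      (hasFDerivAt_jacobiTheta₂ (q + I * μ * p) (by simpa using hμ)) hpath
  rw [funext (theta_eq_mul_jacobiTheta₂ p q), thetaD_one_eq_mul_jacobiTheta₂_fderiv p q hμ]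
  refine (hexp.mul hjac).congr_deriv ?_
  simp only [id, mul_one]
  ring

lemma analyticAt_theta (p q : ℂ) {μ : ℂ} (hμ : 0 < μ.re) : AnalyticAt ℂ (theta p q) μ :=
  DifferentiableOn.analyticAt
    (fun _ hν => (hasDerivAt_theta p q hν).differentiableAt.differentiableWithinAt)
    ((isOpen_re_gt 0).mem_nhds hμ)

theorem theta_inv (p q : ℂ) {μ : ℂ} (hμ : μ ≠ 0) :
    theta p q μ⁻¹ = μ ^ (1 / 2 : ℂ) * exp (2 * Real.pi * I * p * q) * theta q (-p) μ := by
  have hroot : μ ^ (1 / 2 : ℂ) ≠ 0 := by simp [cpow_eq_zero_iff, hμ]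
  have hz : (-p + I * μ * q) / (I * μ) = q + I * μ⁻¹ * p := by
    field_simp
    linear_combination -p * I_sq
  have hneg_inv : -1 / (I * μ) = I * μ⁻¹ := by
    field_simp
    exact I_sq.symm
  have hbase : -I * (I * μ) = μ := by linear_combination -μ * I_sq
  have hexponent : -Real.pi * p ^ 2 * μ⁻¹ + 2 * Real.pi * I * p * q =
      2 * Real.pi * I * p * q + (-Real.pi * q ^ 2 * μ + 2 * Real.pi * I * q * -p) +
        -Real.pi * I * (-p + I * μ * q) ^ 2 / (I * μ) := by
    field_simp
    linear_combination (μ ^ 2 * q ^ 2 : ℂ) * I_sq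
  rw [theta_eq_mul_jacobiTheta₂, theta_eq_mul_jacobiTheta₂,
    jacobiTheta₂_functional_equation (-p + I * μ * q), hz, hneg_inv, hbase, hexponent, exp_add,
    exp_add]
  field_simp

end Theta

section OneParametricFamily

open Complex

/-- `w[q₀](iμ) = 1/(μ+q₀) + 2 ∂μθ[p,q](iμ)/θ[p,q](iμ)`: the functions `w₁`, `w₂`, `w₃` of the
one-parametric family are the cases `(p, q) = (1/2, 0)`, `(0, 0)`, `(0, 1/2)`. -/
def oneParamW (p q q0 μ : ℂ) : ℂ := 1 / (μ + q0) + 2 * thetaD 1 p q μ / theta p q μ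

lemma oneParamW_half_zero : oneParamW (1 / 2) 0 = v1 := rfl

lemma oneParamW_zero_half : oneParamW 0 (1 / 2) = v3 := rfl

/-- The function `(μ+q₀) θ[p,q](iμ)²`, whose logarithmic derivative is `oneParamW p q q0`. -/
def oneParamPotential (p q q0 μ : ℂ) : ℂ := (μ + q0) * theta p q μ ^ 2

lemma analyticAt_oneParamPotential (p q q0 : ℂ) {μ : ℂ} (hμ : 0 < μ.re) :
    AnalyticAt ℂ (oneParamPotential p q q0) μ :=
  (analyticAt_id.add analyticAt_const).mul ((analyticAt_theta p q hμ).pow 2)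

lemma logDeriv_oneParamPotential {p q q0 μ : ℂ} (hμ : 0 < μ.re)
    (hΦ : oneParamPotential p q q0 μ ≠ 0) :
    logDeriv (oneParamPotential p q q0) μ = oneParamW p q q0 μ := by
  obtain ⟨hpole, hθ⟩ := mul_ne_zero_iff.mp hΦ
  have hderiv : HasDerivAt (oneParamPotential p q q0) _ μ :=
    ((hasDerivAt_id μ).add_const q0).mul ((hasDerivAt_theta p q hμ).pow 2)
  have hθ' : theta p q μ ≠ 0 := by simpa using hθ
  rw [logDeriv_apply, hderiv.deriv, oneParamPotential, oneParamW]
  simp only [id]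
  field_simp
  ring

lemma logDeriv_oneParamPotential_eventuallyEq {p q q0 μ : ℂ} (hμ : 0 < μ.re)
    (hΦ : oneParamPotential p q q0 μ ≠ 0) :
    logDeriv (oneParamPotential p q q0) =ᶠ[nhds μ] oneParamW p q q0 := by
  filter_upwards [(isOpen_re_gt 0).mem_nhds hμ,
    (analyticAt_oneParamPotential p q q0 hμ).continuousAt.eventually_ne hΦ] with ν hν hΦν
  exact logDeriv_oneParamPotential hν hΦν

lemma analyticAt_oneParamW {p q q0 μ : ℂ} (hμ : 0 < μ.re)
    (hΦ : oneParamPotential p q q0 μ ≠ 0) : AnalyticAt ℂ (oneParamW p q q0) μ :=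
  have h := analyticAt_oneParamPotential p q q0 hμ
  (h.deriv.div h hΦ).congr (logDeriv_oneParamPotential_eventuallyEq hμ hΦ)

lemma oneParamPotential_inv (p q : ℂ) {q0 μ : ℂ} (hq0 : q0 ≠ 0) (hμ : μ ≠ 0) :
    oneParamPotential p q q0 μ⁻¹ =
      q0 * exp (2 * Real.pi * I * p * q) ^ 2 * oneParamPotential q (-p) q0⁻¹ μ := by
  have hroot : (μ ^ (1 / 2 : ℂ)) ^ 2 = μ := by simp
  rw [oneParamPotential, oneParamPotential, theta_inv p q hμ, mul_pow, mul_pow, hroot]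
  field_simp
  ring

theorem oneParamW_inv {p q q0 s : ℂ} (hq0 : q0 ≠ 0) (hs : 0 < s.re)
    (hΦ : oneParamPotential q (-p) q0⁻¹ s⁻¹ ≠ 0) :
    oneParamW p q q0 s = -(s⁻¹ ^ 2 * oneParamW q (-p) q0⁻¹ s⁻¹) := by
  set C := q0 * exp (2 * Real.pi * I * p * q) ^ 2
  have hC : C ≠ 0 := mul_ne_zero hq0 (pow_ne_zero 2 (exp_ne_zero _))
  have invert {ν : ℂ} (hν : 0 < ν.re) :
      oneParamPotential p q q0 ν = C * oneParamPotential q (-p) q0⁻¹ ν⁻¹ := by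
    simpa using oneParamPotential_inv p q hq0 (inv_ne_zero (ne_zero_of_re_pos hν))
  have heq : oneParamPotential p q q0 =ᶠ[nhds s]
      fun ν => C * oneParamPotential q (-p) q0⁻¹ ν⁻¹ :=
    Filter.eventually_of_mem ((isOpen_re_gt 0).mem_nhds hs) fun _ => invert
  calc oneParamW p q q0 s
      = logDeriv (oneParamPotential p q q0) s :=
        (logDeriv_oneParamPotential hs (by rw [invert hs]; exact mul_ne_zero hC hΦ)).symm
    _ = logDeriv (fun ν => C * oneParamPotential q (-p) q0⁻¹ ν⁻¹) s := by
        rw [logDeriv_apply, logDeriv_apply, heq.deriv_eq, heq.eq_of_nhds]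
    _ = logDeriv (fun ν => oneParamPotential q (-p) q0⁻¹ ν⁻¹) s := logDeriv_const_mul s C hC
    _ = -(s⁻¹ ^ 2 * logDeriv (oneParamPotential q (-p) q0⁻¹) s⁻¹) :=
        logDeriv_comp_inv (ne_zero_of_re_pos hs)
          (analyticAt_oneParamPotential q (-p) q0⁻¹ (inv_re_pos hs)).differentiableAt
    _ = -(s⁻¹ ^ 2 * oneParamW q (-p) q0⁻¹ s⁻¹) := by
        rw [logDeriv_oneParamPotential (inv_re_pos hs) hΦ]

end OneParametricFamily

theorem statement14_general (p q : ℂ) {q0 μ : ℂ} (n : ℕ) (hμ : 0 < μ.re) (hq0 : q0 ≠ 0)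
    (hpole : μ + 1 / q0 ≠ 0) (hθ : theta q (-p) μ ≠ 0) :
    iteratedDeriv n (oneParamW p q q0) (1 / μ) =
      (-1) ^ (n + 1) * ∑ k ∈ Finset.range (n + 1), weightedLah 2 n k * μ ^ (2 + n + k) *
        iteratedDeriv k (oneParamW q (-p) (1 / q0)) μ := by
  rw [one_div] at hpole
  have hΦ : oneParamPotential q (-p) q0⁻¹ μ ≠ 0 := mul_ne_zero hpole (pow_ne_zero 2 hθ)
  have hμ0 : μ ≠ 0 := Complex.ne_zero_of_re_pos hμ
  have heq : oneParamW p q q0 =ᶠ[nhds μ⁻¹]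
      fun s => -(s⁻¹ ^ 2 • oneParamW q (-p) q0⁻¹ s⁻¹) := by
    have hΦ_near : ∀ᶠ s in nhds μ⁻¹, oneParamPotential q (-p) q0⁻¹ s⁻¹ ≠ 0 :=
      (continuousAt_inv₀ (inv_ne_zero hμ0)).eventually <| by
        rw [inv_inv]
        exact (analyticAt_oneParamPotential q (-p) q0⁻¹ hμ).continuousAt.eventually_ne hΦ
    filter_upwards [(Complex.isOpen_re_gt 0).mem_nhds (inv_re_pos hμ), hΦ_near] with s hs hΦs
    exact oneParamW_inv hq0 hs hΦs
  have hsmooth : ContDiffAt ℂ n (oneParamW q (-p) q0⁻¹) μ⁻¹⁻¹ := by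
    rw [inv_inv]
    exact (analyticAt_oneParamW hμ hΦ).contDiffAt
  rw [one_div, one_div, heq.iteratedDeriv_eq, iteratedDeriv_fun_neg,
    iteratedDeriv_inv_pow_smul_comp_inv 2 n (inv_ne_zero hμ0) hsmooth, inv_inv]
  simp only [nsmul_eq_mul, smul_eq_mul, pow_succ, mul_assoc, mul_neg_one, neg_mul]

/-- Lemma 6.4: behavior of `w₃[q₀]` and its μ-derivatives up to order 4 under
`iμ ↦ i/μ`, expressed through `w₁[1/q₀]`. -/
theorem statement14 (q0 : ℝ) (hq0 : 0 < q0) (μ : ℂ) (hμ : 0 < μ.re)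
    (h2 : ∀ ν : ℂ, 0 < ν.re → theta (1 / 2) 0 ν ≠ 0)
    (h3 : ∀ ν : ℂ, 0 < ν.re → theta 0 0 ν ≠ 0)
    (h4 : ∀ ν : ℂ, 0 < ν.re → theta 0 (1 / 2) ν ≠ 0) :
    v3 (q0 : ℂ) (1 / μ) = -μ ^ 2 * v1 (1 / (q0 : ℂ)) μ ∧
    iteratedDeriv 1 (v3 (q0 : ℂ)) (1 / μ) =
        μ ^ 4 * iteratedDeriv 1 (v1 (1 / (q0 : ℂ))) μ + 2 * μ ^ 3 * v1 (1 / (q0 : ℂ)) μ ∧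
    iteratedDeriv 2 (v3 (q0 : ℂ)) (1 / μ) =
        -μ ^ 6 * iteratedDeriv 2 (v1 (1 / (q0 : ℂ))) μ -
          6 * μ ^ 5 * iteratedDeriv 1 (v1 (1 / (q0 : ℂ))) μ - 6 * μ ^ 4 * v1 (1 / (q0 : ℂ)) μ ∧
    iteratedDeriv 3 (v3 (q0 : ℂ)) (1 / μ) =
        μ ^ 8 * iteratedDeriv 3 (v1 (1 / (q0 : ℂ))) μ +
          12 * μ ^ 7 * iteratedDeriv 2 (v1 (1 / (q0 : ℂ))) μ +
          36 * μ ^ 6 * iteratedDeriv 1 (v1 (1 / (q0 : ℂ))) μ + 24 * μ ^ 5 * v1 (1 / (q0 : ℂ)) μ ∧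
    iteratedDeriv 4 (v3 (q0 : ℂ)) (1 / μ) =
        -μ ^ 10 * iteratedDeriv 4 (v1 (1 / (q0 : ℂ))) μ -
          20 * μ ^ 9 * iteratedDeriv 3 (v1 (1 / (q0 : ℂ))) μ -
          120 * μ ^ 8 * iteratedDeriv 2 (v1 (1 / (q0 : ℂ))) μ -
          240 * μ ^ 7 * iteratedDeriv 1 (v1 (1 / (q0 : ℂ))) μ -
          120 * μ ^ 6 * v1 (1 / (q0 : ℂ)) μ := by
  have hq0' : (q0 : ℂ) ≠ 0 := by exact_mod_cast hq0.ne'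
  have hpole : μ + 1 / (q0 : ℂ) ≠ 0 := Complex.ne_zero_of_re_pos <| by
    simpa using add_pos hμ (inv_pos.mpr hq0)
  have transform (n : ℕ) := statement14_general 0 (1 / 2) n hμ hq0' hpole (by simpa using h2 μ hμ)
  simp only [neg_zero, oneParamW_zero_half, oneParamW_half_zero] at transform
  refine ⟨by simpa [weightedLah] using transform 0, ?_, ?_, ?_, ?_⟩ <;> rw [transform] <;>
    norm_num [Finset.sum_range_succ, weightedLah, Nat.choose, Nat.ascFactorial] <;> ring

end
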